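/- Let ĥ : ℝ → ℝ be continuous with ĥ(t) = 0 for every t ∉ [1/2, 2], and suppose ĥ(t)² + ĥ(2t)² = 1 for every t ∈ [1/2, 1]. Define h : ℝ → ℝ by h(t) = 1 if t < 1 and h(t) = ĥ(t)² if t ≥ 1. Then for every real t ≥ 1 and every natural number J, h(t/2^J) = Σ_{j=0}^{J} ĥ(t/2^j)². -/

import Mathlib

/-!
For every real `s` the associated filter satisfies the two-scale relation `h s = h (2s) + ĥ(s)²`.
Taking `s = t / 2 ^ (j + 1)` and summing over `j < J` telescopes to
`h (t / 2 ^ J) = h t + ∑_{1 ≤ j ≤ J} ĥ(t / 2 ^ j)²`, and `h t = ĥ(t)²` once `t ≥ 1`.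
At `s = 1` the two-scale relation amounts to `ĥ 2 = 0`, which continuity forces.
-/

open Set

/-- A dyadic partition of unity on the positive half-line: the property of the square `w = ĥ²` of
a needlet filter that drives the telescoping. The half-open support encodes `w 2 = 0`, the
value that continuity forces on a filter supported in `[1/2, 2]`. -/
structure IsDyadicPartitionOfUnity {K M : Type*} [Field K] [LinearOrder K] [AddCommMonoid M]
    [One M] (w : K → M) : Prop where
  eq_zero_of_notMem : ∀ t ∉ Ico (1 / 2 : K) 2, w t = 0
  add_two_mul : ∀ t ∈ Ico (1 / 2 : K) 1, w t + w (2 * t) = 1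

/-- The low-pass filter associated with `w`, which is the filter `h` of the needlet construction
when `w = ĥ²`. -/
def lowPassFilter {K M : Type*} [Field K] [LinearOrder K] [One M] (w : K → M) (t : K) : M :=
  if t < 1 then 1 else w t

section

variable {K M : Type*} [Field K] [LinearOrder K] {w : K → M} {t : K}

theorem lowPassFilter_of_lt_one [One M] (ht : t < 1) : lowPassFilter w t = 1 :=
  if_pos ht

theorem lowPassFilter_of_one_le [One M] (ht : 1 ≤ t) : lowPassFilter w t = w t :=
  if_neg ht.not_gt

variable [IsStrictOrderedRing K] [AddCommMonoid M] [One M]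

namespace IsDyadicPartitionOfUnity

theorem of_continuous [TopologicalSpace K] [OrderTopology K] [TopologicalSpace M] [T2Space M]
    (hcont : Continuous w) (hsupp : ∀ t ∉ Icc (1 / 2 : K) 2, w t = 0)
    (hpart : ∀ t ∈ Ico (1 / 2 : K) 1, w t + w (2 * t) = 1) : IsDyadicPartitionOfUnity w where
  eq_zero_of_notMem t ht := by
    have hzero : EqOn w 0 (Ioi 2) := fun s hs => hsupp s fun hmem => hmem.2.not_gt hs
    have hzero_closed : EqOn w 0 (Ici 2) := by
      simpa only [closure_Ioi] using hzero.closure hcont continuous_zero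
    rcases lt_or_ge t 2 with htwo | htwo
    · exact hsupp t fun hmem => ht ⟨hmem.1, htwo⟩
    · exact hzero_closed htwo
  add_two_mul := hpart

theorem lowPassFilter_eq_add (hw : IsDyadicPartitionOfUnity w) (s : K) :
    lowPassFilter w s = lowPassFilter w (2 * s) + w s := by
  rcases lt_or_ge s (1 / 2) with hhalf | hhalf
  · have hzero : w s = 0 := hw.eq_zero_of_notMem s fun hmem => hmem.1.not_gt hhalf
    rw [lowPassFilter_of_lt_one (by linarith), lowPassFilter_of_lt_one (by linarith), hzero,
      add_zero]
  rw [lowPassFilter_of_one_le (t := 2 * s) (by linarith)]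
  rcases lt_or_ge s 1 with hone | hone
  · rw [lowPassFilter_of_lt_one hone, add_comm, hw.add_two_mul s ⟨hhalf, hone⟩]
  · have hzero : w (2 * s) = 0 := hw.eq_zero_of_notMem _ fun hmem => by linarith [hmem.2]
    rw [lowPassFilter_of_one_le hone, hzero, zero_add]

theorem lowPassFilter_div_two_pow (hw : IsDyadicPartitionOfUnity w) (t : K) (J : ℕ) :
    lowPassFilter w (t / 2 ^ J) =
      lowPassFilter w t + ∑ j ∈ Finset.range J, w (t / 2 ^ (j + 1)) := by
  induction J with
  | zero => simp
  | succ J ih =>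
    have hscale : 2 * (t / 2 ^ (J + 1)) = t / 2 ^ J := by
      rw [pow_succ', ← mul_div_assoc, mul_div_mul_left _ _ two_ne_zero]
    rw [hw.lowPassFilter_eq_add, hscale, ih, Finset.sum_range_succ, add_assoc]

end IsDyadicPartitionOfUnity

theorem stmt13_general (hw : IsDyadicPartitionOfUnity w) (ht : 1 ≤ t) (J : ℕ) :
    lowPassFilter w (t / 2 ^ J) = ∑ j ∈ Finset.range (J + 1), w (t / 2 ^ j) := by
  rw [hw.lowPassFilter_div_two_pow, lowPassFilter_of_one_le ht, Finset.sum_range_succ', pow_zero,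
    div_one, add_comm]

end

/-- For a needlet filter `ĥ` (continuous, supported in `[1/2,2]`, with
`ĥ(t)² + ĥ(2t)² = 1` on `[1/2,1]`) and the associated filter `h` (`h = 1` on `(-∞,1)`,
`h = ĥ²` on `[1,∞)`), one has the telescoping identity
`h(t/2^J) = Σ_{j=0}^{J} ĥ(t/2^j)²` for every `t ≥ 1` and `J ∈ ℕ`. -/
theorem stmt13 (needletFilter : ℝ → ℝ) (hcont : Continuous needletFilter)
    (hsupp : ∀ t : ℝ, t ∉ Set.Icc (1/2 : ℝ) 2 → needletFilter t = 0)
    (hpart : ∀ t ∈ Set.Icc (1/2 : ℝ) 1,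
      (needletFilter t)^2 + (needletFilter (2*t))^2 = 1)
    (h : ℝ → ℝ)
    (hdef : ∀ t : ℝ, h t = if t < 1 then 1 else (needletFilter t)^2)
    (t : ℝ) (ht : 1 ≤ t) (J : ℕ) :
    h (t / 2^J) = ∑ j ∈ Finset.range (J+1), (needletFilter (t / 2^j))^2 :=
  (hdef _).trans <| stmt13_general (.of_continuous (hcont.pow 2)
    (fun s hs => by simp [hsupp s hs]) fun s hs => hpart s (Ico_subset_Icc_self hs)) ht J
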